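/- Let 0 < λ < 1 and let F_λ be the attractor of the IFS on ℝ given by S_1(x) = x/3, S_2(x) = x/3 + λ/3, S_3(x) = x/3 + 2/3 (the λ-Cantor set), with canonical projection π : {1,2,3}^ℕ → F_λ. Then the Hausdorff dimension of F_λ is the unique real root t of the equation P_π(−t·log 3) = 0. -/

import Mathlib

/-!
Fix `n`, and let `N n` be the number of cubes of side `3⁻ⁿ` in the grid that meet `K`. The potential
`-t log 3` is constant, so the partition function is exactly `N n * 3^(-n t)` (every point of `K` has
a code, so the supremum over a cube that meets `K` is not an empty one). Everything therefore
reduces to `log (N n) / n → dim_H K * log 3`: the Hausdorff and box dimensions of `K` coincide, even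
though the pieces `S_i K` may overlap. The pressure is then `(dim_H K - t) * log 3`.

* `dim_le_of_frequently`: the cubes cover `K`, so the Hausdorff dimension is at most the lower box
  dimension.
* `card_le`: keeping one residue class of cube indices modulo `4` leaves at least `N n / 4` cubes at
  mutual distance at least `3 * 3⁻ⁿ`. Each of them contains a point of a cylinder `S_w K` with
  `|w| = n`, of diameter at most `3⁻ⁿ`, so these cylinders are `3⁻ⁿ`-separated.
* `separated_dim`: a family of `m` similarities of ratio `ρ` that map `K` into pairwise separated
  subsets of `K` generates a self-similar Cantor subset of `K`, on which reading off the code as a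
  number in base `m` is Hölder of exponent `log m / -log ρ` and onto `[0, 1]`. This forces
  `dim_H K ≥ log m / -log ρ`, here with `m ≥ N n / 4` and `ρ = 3⁻ⁿ`.
-/

/- Example 3.1: the λ-Cantor set. Its Hausdorff dimension is the unique root of
   the Bowen equation `P_π(−t·log 3) = 0` for the projection pressure. -/

open MeasureTheory Filter Set

noncomputable section

/-- The symbolic space `Σ = {1,2,3}^ℕ`. -/
abbrev Sig (l : ℕ) := ℕ → Fin l

/-- The left shift `σ` on `Σ`. -/
def shift {l : ℕ} (x : Sig l) : Sig l := fun n => x (n + 1)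

/-- First-coordinate cylinder partition `P = {[j] : 1 ≤ j ≤ l}`. -/
def cylP {l : ℕ} : Fin l → Set (Sig l) := fun j => {x | x 0 = j}

/-- Conditional entropy `H_μ(ξ | 𝒜) = ∫ I_μ(ξ|𝒜) dμ` of a finite partition `ξ`
    given a sub-σ-algebra `𝒜`. -/
def condEntropyPart {α : Type*} [MeasurableSpace α] {ι : Type*} [Fintype ι]
    (μ : Measure α) (part : ι → Set α) (m : MeasurableSpace α) : ℝ :=
  ∑ i : ι, ∫ x in part i,
    -Real.log ((μ[(part i).indicator (fun _ => (1 : ℝ)) | m]) x) ∂μ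

/-- Projection entropy `h_π(σ,μ) = H_μ(P | σ⁻¹π⁻¹γ) − H_μ(P | π⁻¹γ)`. -/
def projEntropy {l : ℕ} {E : Type*} [mE : MeasurableSpace E]
    (π : Sig l → E) (μ : Measure (Sig l)) : ℝ :=
  condEntropyPart μ cylP (MeasurableSpace.comap (fun x => π (shift x)) mE)
    - condEntropyPart μ cylP (MeasurableSpace.comap π mE)

/-- `itIm S K x n = S_{x 0} ∘ ⋯ ∘ S_{x (n-1)} (K)`. -/
def itIm {l : ℕ} {E : Type*} (S : Fin l → E → E) (K : Set E) : Sig l → ℕ → Set E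
  | _, 0 => K
  | x, n + 1 => S (x 0) '' itIm S K (shift x) n

/-- The element `3^{-n}([0,1) + α)` of the partition `𝒬_n = {3^{-n} Q : Q ∈ 𝒬}` of `ℝ`. -/
def Qcube (n : ℕ) (α : ℤ) : Set ℝ := (fun x : ℝ => x / 3 ^ n) '' Ico (α : ℝ) ((α : ℝ) + 1)

/-- Birkhoff sum `S_n g (x) = ∑_{i<n} g(σ^i x)`. -/
def birk {l : ℕ} (g : Sig l → ℝ) (n : ℕ) (x : Sig l) : ℝ :=
  ∑ i ∈ Finset.range n, g (shift^[i] x)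

/-- The partition function
`∑_{Q ∈ 𝒬_n, Q ∩ K ≠ ∅} sup_{α ∈ π⁻¹(Q ∩ K)} exp((S_n f∘π)(α))`. -/
def Zsum {l : ℕ} (K : Set ℝ) (π : Sig l → ℝ) (f : ℝ → ℝ) (n : ℕ) : ℝ :=
  ∑' α : ℤ, ⨆ β ∈ π ⁻¹' (Qcube n α ∩ K), Real.exp (birk (fun y => f (π y)) n β)

/-- The projection pressure `P_π(f)` (Definition 2.3), realized as a `limsup`
(by Theorem 2.1 the limit exists). -/
def projPressure {l : ℕ} (K : Set ℝ) (π : Sig l → ℝ) (f : ℝ → ℝ) : ℝ :=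
  limsup (fun n : ℕ => Real.log (Zsum K π f n) / n) atTop

/-! ### Lower bound for the dimension from a separated subsystem -/

/-- If the similarities `x ↦ ρ x + b i`, `i < m`, map the compact set `K` into itself with images at
mutual distance at least `δ > 0`, then `dim_H K ≥ log m / -log ρ`. The inverse of the coding map of
the subsystem, followed by the base-`m` expansion, is a Hölder map from a subset of `K` onto
`[0, 1]`. -/
lemma separated_dim (K : Set ℝ) (hK : IsCompact K) (hne : K.Nonempty) (ρ : ℝ) (hρ0 : 0 < ρ)
    (hρ1 : ρ < 1) (m : ℕ) (hm : 1 < m) (b : Fin m → ℝ) (hb : ∀ i, ∀ y ∈ K, ρ * y + b i ∈ K)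
    (δ : ℝ) (hδ : 0 < δ)
    (hsep : ∀ i j, i ≠ j → ∀ x ∈ K, ∀ y ∈ K, δ ≤ |(ρ * x + b i) - (ρ * y + b j)|) :
    Real.log m ≤ (dimH K).toReal * -Real.log ρ := by
  have hm0 : (0 : ℝ) < m := by exact_mod_cast (by omega : 0 < m)
  have hm1 : (1 : ℝ) < m := by exact_mod_cast hm
  have hlogm : 0 < Real.log m := Real.log_pos hm1
  have hlogρ : 0 < -Real.log ρ := by
    have := Real.log_neg hρ0 hρ1
    linarith
  -- the coding map of the subsystem: `e d` is the limit of the first `n` maps coded by `d`, composed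
  let e : (ℕ → Fin m) → ℝ := fun d => ∑' k, b (d k) * ρ ^ k
  have hsum : ∀ d : ℕ → Fin m, Summable fun k => b (d k) * ρ ^ k := by
    intro d
    refine Summable.of_norm_bounded (g := fun k => (∑ i, |b i|) * ρ ^ k)
      ((summable_geometric_of_lt_one hρ0.le hρ1).mul_left _) ?_
    intro k
    rw [norm_mul, Real.norm_eq_abs, Real.norm_eq_abs, abs_of_pos (pow_pos hρ0 k)]
    gcongr
    exact Finset.single_le_sum (f := fun i => |b i|) (fun i _ => abs_nonneg _) (Finset.mem_univ _)
  have hrec : ∀ d : ℕ → Fin m, e d = ρ * e (fun k => d (k + 1)) + b (d 0) := by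
    intro d
    simp only [e]
    rw [(hsum d).tsum_eq_zero_add, ← tsum_mul_left]
    simp only [pow_zero, mul_one, pow_succ]
    rw [add_comm]
    congr 1
    exact tsum_congr fun k => by ring
  obtain ⟨y₀, hy₀⟩ := hne
  have hpart : ∀ (n : ℕ) (d : ℕ → Fin m), ∀ y ∈ K,
      ∑ k ∈ Finset.range n, b (d k) * ρ ^ k + ρ ^ n * y ∈ K := by
    intro n
    induction n with
    | zero => intro d y hy; simpa using hy
    | succ n ih =>
      intro d y hy
      have := ih d _ (hb (d n) y hy)
      rw [Finset.sum_range_succ]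
      convert this using 1
      ring
  have hmem : ∀ d, e d ∈ K := by
    intro d
    refine hK.isClosed.mem_of_tendsto (b := atTop) ?_ (Eventually.of_forall fun n => hpart n d y₀ hy₀)
    have h1 := (hsum d).hasSum.tendsto_sum_nat
    have h2 := (tendsto_pow_atTop_nhds_zero_of_lt_one hρ0.le hρ1).mul_const y₀
    simpa using h1.add h2
  have hdist : ∀ (k : ℕ) (d d' : ℕ → Fin m), (∀ i < k, d i = d' i) → d k ≠ d' k →
      δ * ρ ^ k ≤ |e d - e d'| := by
    intro k
    induction k with
    | zero =>
      intro d d' _ h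
      rw [hrec d, hrec d']
      simpa using hsep _ _ h _ (hmem _) _ (hmem _)
    | succ k ih =>
      intro d d' h h'
      have h3 := ih (fun k => d (k + 1)) (fun k => d' (k + 1)) (fun i hi => h _ (by omega)) h'
      rw [hrec d, hrec d', h 0 (by omega), add_sub_add_right_eq_sub, ← mul_sub, abs_mul,
        abs_of_pos hρ0, pow_succ]
      nlinarith
  -- two distinct codes have a first index at which they differ
  have hfirst : ∀ d d' : ℕ → Fin m, d ≠ d' → ∃ k, (∀ i < k, d i = d' i) ∧ d k ≠ d' k := by
    intro d d' h
    classical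
    have hex : ∃ k, d k ≠ d' k := Function.ne_iff.mp h
    exact ⟨Nat.find hex, fun i hi => not_not.mp (Nat.find_min hex hi), Nat.find_spec hex⟩
  have hinj : Function.Injective e := by
    intro d d' h
    by_contra hne
    obtain ⟨k, h1, h2⟩ := hfirst d d' hne
    have h3 := hdist k d d' h1 h2
    rw [h, sub_self, abs_zero] at h3
    have := mul_pos hδ (pow_pos hρ0 k)
    linarith
  have : Nonempty (Fin m) := ⟨⟨0, by omega⟩⟩
  set r : ℝ := Real.log m / -Real.log ρ with hr
  have hrpos : 0 < r := div_pos hlogm hlogρ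
  have hρr : ρ ^ r = (m : ℝ)⁻¹ := by
    rw [Real.rpow_def_of_pos hρ0, hr]
    have : Real.log ρ * (Real.log m / -Real.log ρ) = -Real.log m := by
      have : Real.log ρ ≠ 0 := by linarith
      field_simp
    rw [this, Real.exp_neg, Real.exp_log hm0]
  have hkey : ∀ d d', |Real.ofDigits d - Real.ofDigits d'| ≤ δ⁻¹ ^ r * |e d - e d'| ^ r := by
    intro d d'
    by_cases h : d = d'
    · subst h
      simp [Real.zero_rpow hrpos.ne']
    obtain ⟨k, h1, h2⟩ := hfirst d d' h
    have h3 := hdist k d d' h1 h2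
    calc |Real.ofDigits d - Real.ofDigits d'| ≤ ((m : ℝ) ^ k)⁻¹ :=
          Real.abs_ofDigits_sub_ofDigits_le h1
      _ = (ρ ^ k) ^ r := by
          rw [← Real.rpow_natCast ρ k, ← Real.rpow_mul hρ0.le, mul_comm, Real.rpow_mul hρ0.le, hρr,
            Real.rpow_natCast, inv_pow]
      _ ≤ (δ⁻¹ * |e d - e d'|) ^ r := by
          apply Real.rpow_le_rpow (by positivity) _ hrpos.le
          rw [inv_mul_eq_div, le_div_iff₀ hδ]
          linarith
      _ = _ := Real.mul_rpow (by positivity) (abs_nonneg _)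
  let g : ℝ → ℝ := fun x => Real.ofDigits (Function.invFun e x)
  have hg : ∀ d, g (e d) = Real.ofDigits d := fun d => by
    simp only [g, Function.leftInverse_invFun hinj d]
  have hhold : HolderOnWith (Real.toNNReal (δ⁻¹ ^ r)) (Real.toNNReal r) g (range e) := by
    rintro _ ⟨d, rfl⟩ _ ⟨d', rfl⟩
    rw [hg, hg, edist_dist, edist_dist, Real.dist_eq, Real.dist_eq, Real.coe_toNNReal r hrpos.le,
      ENNReal.ofReal_rpow_of_nonneg (abs_nonneg _) hrpos.le]
    change _ ≤ ENNReal.ofReal _ * _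
    rw [← ENNReal.ofReal_mul (by positivity)]
    exact ENNReal.ofReal_le_ofReal (hkey d d')
  have hd1 := hhold.dimH_image_le (Real.toNNReal_pos.mpr hrpos)
  have hsub : Icc (0 : ℝ) 1 ⊆ g '' range e := by
    intro x hx
    obtain ⟨d, -, hd⟩ := Real.ofDigits_SurjOn hm hx
    exact ⟨e d, mem_range_self d, by rw [hg, hd]⟩
  have hd2 : dimH (Icc (0 : ℝ) 1) = 1 := by
    rw [Real.dimH_of_nonempty_interior (by simp [interior_Icc])]
    simp
  have hd3 : dimH (range e) ≤ dimH K := dimH_mono (by rintro _ ⟨d, rfl⟩; exact hmem d)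
  have hr0 : (Real.toNNReal r : ENNReal) ≠ 0 := by
    simpa using hrpos
  have hd4 : (1 : ENNReal) ≤ dimH K / (Real.toNNReal r : ENNReal) :=
    calc (1 : ENNReal) = dimH (Icc (0 : ℝ) 1) := hd2.symm
      _ ≤ dimH (g '' range e) := dimH_mono hsub
      _ ≤ dimH (range e) / (Real.toNNReal r : ENNReal) := hd1
      _ ≤ _ := ENNReal.div_le_div_right hd3 _
  rw [ENNReal.le_div_iff_mul_le (Or.inl hr0) (Or.inl ENNReal.coe_ne_top), one_mul] at hd4
  have htop : dimH K ≠ ⊤ := by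
    have := dimH_mono (subset_univ K)
    rw [Real.dimH_univ] at this
    exact ne_top_of_le_ne_top ENNReal.one_ne_top this
  have h5 : r ≤ (dimH K).toReal := by
    have := ENNReal.toReal_mono htop hd4
    simpa [hrpos.le] using this
  rwa [hr, div_le_iff₀ hlogρ] at h5

/-! ### Grid cubes that meet `K` -/

lemma mem_Qcube {n : ℕ} {α : ℤ} {x : ℝ} :
    x ∈ Qcube n α ↔ (α : ℝ) ≤ x * 3 ^ n ∧ x * 3 ^ n < α + 1 := by
  have h3 : (0 : ℝ) < 3 ^ n := by positivity
  constructor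
  · rintro ⟨y, ⟨h1, h2⟩, rfl⟩
    simp only
    rw [div_mul_cancel₀ _ h3.ne']
    exact ⟨h1, h2⟩
  · rintro ⟨h1, h2⟩
    exact ⟨x * 3 ^ n, ⟨h1, h2⟩, mul_div_cancel_right₀ _ h3.ne'⟩

open Classical in
/-- Indices of the cubes of side `3⁻ⁿ` that meet `K`. The range `0 ≤ α ≤ 3 ^ n` makes this a finite
set and loses nothing when `K ⊆ [0, 1]`; the value `α = 3 ^ n` is needed for the point `1`. -/
def cubes (K : Set ℝ) (n : ℕ) : Finset ℤ :=
  (Finset.Icc (0 : ℤ) (3 ^ n)).filter fun α => (Qcube n α ∩ K).Nonempty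

lemma mem_cubes {K : Set ℝ} (h01 : K ⊆ Icc 0 1) {n : ℕ} {α : ℤ} :
    α ∈ cubes K n ↔ (Qcube n α ∩ K).Nonempty := by
  classical
  simp only [cubes, Finset.mem_filter, and_iff_right_iff_imp, Finset.mem_Icc]
  rintro ⟨x, hx, hxK⟩
  rw [mem_Qcube] at hx
  obtain ⟨h0, h1⟩ := h01 hxK
  have h3 : (0 : ℝ) < 3 ^ n := by positivity
  constructor
  · have : (-1 : ℝ) < α := by nlinarith [mul_nonneg h0 h3.le]
    have : (-1 : ℤ) < α := by exact_mod_cast this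
    omega
  · have : (α : ℝ) ≤ 3 ^ n := by nlinarith
    exact_mod_cast this

lemma exists_cube {K : Set ℝ} (h01 : K ⊆ Icc 0 1) {x : ℝ} (hx : x ∈ K) (n : ℕ) :
    ∃ α ∈ cubes K n, x ∈ Qcube n α := by
  have : x ∈ Qcube n ⌊x * 3 ^ n⌋ := mem_Qcube.mpr ⟨Int.floor_le _, Int.lt_floor_add_one _⟩
  exact ⟨_, (mem_cubes h01).mpr ⟨x, this, hx⟩, this⟩

lemma cubes_card_pos {K : Set ℝ} (h01 : K ⊆ Icc 0 1) (hne : K.Nonempty) (n : ℕ) :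
    0 < (cubes K n).card := by
  obtain ⟨x, hx⟩ := hne
  obtain ⟨α, hα, -⟩ := exists_cube h01 hx n
  exact Finset.card_pos.mpr ⟨α, hα⟩

lemma ediam_Qcube (n : ℕ) (α : ℤ) : Metric.ediam (Qcube n α) ≤ ENNReal.ofReal ((1 / 3) ^ n) := by
  apply Metric.ediam_le
  intro x hx y hy
  rw [mem_Qcube] at hx hy
  rw [edist_dist, Real.dist_eq]
  apply ENNReal.ofReal_le_ofReal
  have h3 : (0 : ℝ) < 3 ^ n := by positivity
  rw [one_div, inv_pow, ← one_div, le_div_iff₀ h3]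
  rcases abs_cases (x - y) with ⟨h, -⟩ | ⟨h, -⟩ <;> rw [h] <;> linarith

/-! ### Hausdorff dimension equals box dimension -/

/-- If `N n ≤ exp (c n)` for infinitely many `n`, where `N n` counts the cubes of side `3⁻ⁿ` meeting
`K`, then the `c / log 3`-dimensional Hausdorff measure of `K` is at most `1`, so
`dim_H K ≤ c / log 3`. -/
lemma dim_le_of_frequently {K : Set ℝ} (h01 : K ⊆ Icc 0 1) (hne : K.Nonempty) (c : ℝ)
    (hc : ∃ᶠ n : ℕ in atTop, Real.log (cubes K n).card / n ≤ c) :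
    (dimH K).toReal * Real.log 3 ≤ c := by
  have hl3 : 0 < Real.log 3 := Real.log_pos (by norm_num)
  have hcard : ∀ n, (1 : ℝ) ≤ (cubes K n).card := fun n => by
    exact_mod_cast cubes_card_pos h01 hne n
  have hc0 : 0 ≤ c := by
    obtain ⟨n, hn⟩ := hc.exists
    exact le_trans (div_nonneg (Real.log_nonneg (hcard n)) (Nat.cast_nonneg n)) hn
  set s : ℝ := c / Real.log 3 with hs
  have hs0 : 0 ≤ s := div_nonneg hc0 hl3.le
  have hmeas := MeasureTheory.Measure.hausdorffMeasure_le_liminf_sum (ι := fun n => cubes K n) s K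
    (l := atTop) (fun n : ℕ => ENNReal.ofReal ((1 / 3 : ℝ) ^ n))
    (by
      rw [← ENNReal.ofReal_zero]
      exact ENNReal.tendsto_ofReal
        (tendsto_pow_atTop_nhds_zero_of_lt_one (by norm_num) (by norm_num)))
    (fun n α => Qcube n α) (Eventually.of_forall fun n α => ediam_Qcube n α)
    (Eventually.of_forall fun n x hx => by
      obtain ⟨α, hα, hxα⟩ := exists_cube h01 hx n
      exact mem_iUnion.mpr ⟨⟨α, hα⟩, hxα⟩)
  have hle : Measure.hausdorffMeasure s K ≤ 1 := by
    refine hmeas.trans (liminf_le_of_frequently_le' ?_)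
    refine (hc.and_eventually (eventually_gt_atTop 0)).mono ?_
    rintro n ⟨hn, hn0⟩
    have hn0' : (0 : ℝ) < n := by exact_mod_cast hn0
    rw [div_le_iff₀ hn0', Real.log_le_iff_le_exp (lt_of_lt_of_le one_pos (hcard n))] at hn
    have hpow : ((1 / 3 : ℝ) ^ n) ^ s = Real.exp (-(c * n)) := by
      rw [← Real.rpow_natCast, ← Real.rpow_mul (by norm_num), Real.rpow_def_of_pos (by norm_num),
        one_div, Real.log_inv, hs]
      congr 1
      field_simp
    calc ∑ i : cubes K n, Metric.ediam (Qcube n i) ^ s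
        ≤ ∑ i : cubes K n, ENNReal.ofReal (Real.exp (-(c * n))) := by
          refine Finset.sum_le_sum fun i _ => ?_
          rw [← hpow, ← ENNReal.ofReal_rpow_of_nonneg (by positivity) hs0]
          exact ENNReal.rpow_le_rpow (ediam_Qcube n i) hs0
      _ = ENNReal.ofReal ((cubes K n).card * Real.exp (-(c * n))) := by
          rw [ENNReal.ofReal_mul (by positivity)]
          simp
      _ ≤ 1 := by
          rw [← ENNReal.ofReal_one]
          apply ENNReal.ofReal_le_ofReal
          rw [Real.exp_neg, ← div_eq_mul_inv, div_le_one (Real.exp_pos _)]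
          exact hn
  have hdim : dimH K ≤ (s.toNNReal : ENNReal) := by
    apply dimH_le_of_hausdorffMeasure_ne_top
    rw [Real.coe_toNNReal s hs0]
    exact ne_top_of_le_ne_top ENNReal.one_ne_top hle
  have h5 : (dimH K).toReal ≤ s := by
    have := ENNReal.toReal_mono ENNReal.coe_ne_top hdim
    simpa [hs0] using this
  rwa [hs, le_div_iff₀ hl3] at h5

/-- Every point of `K` lies in a cylinder of level `n`, the image of `K` under some similarity of
ratio `3⁻ⁿ` that maps `K` into itself. -/
lemma exists_level_map {K : Set ℝ} {c : Fin 3 → ℝ} (h1 : ∀ i, ∀ y ∈ K, y / 3 + c i ∈ K)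
    (h2 : ∀ x ∈ K, ∃ i, ∃ y ∈ K, x = y / 3 + c i) (n : ℕ) :
    ∀ x ∈ K, ∃ b : ℝ, (∃ y ∈ K, x = (1 / 3) ^ n * y + b) ∧ ∀ y ∈ K, (1 / 3) ^ n * y + b ∈ K := by
  induction n with
  | zero => intro x hx; exact ⟨0, ⟨x, hx, by simp⟩, fun y hy => by simpa using hy⟩
  | succ n ih =>
    intro x hx
    obtain ⟨i, y, hy, rfl⟩ := h2 x hx
    obtain ⟨b, ⟨z, hz, rfl⟩, hb⟩ := ih y hy
    refine ⟨b / 3 + c i, ⟨z, hz, by ring⟩, fun w hw => ?_⟩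
    convert h1 i _ (hb w hw) using 1
    ring

/-- The upper box dimension is at most the Hausdorff dimension, in the form
`N n ≤ 4 * 3 ^ (n * dim_H K)`. -/
lemma card_le {K : Set ℝ} (hK : IsCompact K) (h01 : K ⊆ Icc 0 1) (hne : K.Nonempty)
    {c : Fin 3 → ℝ} (h1 : ∀ i, ∀ y ∈ K, y / 3 + c i ∈ K)
    (h2 : ∀ x ∈ K, ∃ i, ∃ y ∈ K, x = y / 3 + c i) (n : ℕ) (hn : 0 < n) :
    Real.log (cubes K n).card ≤ n * ((dimH K).toReal * Real.log 3) + Real.log 4 := by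
  classical
  have hl3 : 0 < Real.log 3 := Real.log_pos (by norm_num)
  have hpos : (0 : ℝ) < (cubes K n).card := by exact_mod_cast cubes_card_pos h01 hne n
  -- one residue class modulo `4` holds at least a quarter of the cubes
  obtain ⟨r, -, hr⟩ : ∃ r ∈ Finset.Ico (0 : ℤ) 4,
      ((cubes K n).card : ℝ) / 4 ≤ ((cubes K n).filter fun α => α % 4 = r).card := by
    by_contra! h
    have hs : (cubes K n).card
        = ∑ r ∈ Finset.Ico (0 : ℤ) 4, ((cubes K n).filter fun α => α % 4 = r).card :=
      Finset.card_eq_sum_card_fiberwise fun α _ => by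
        simp only [Finset.coe_Ico, mem_Ico]
        omega
    have hlt := Finset.sum_lt_sum_of_nonempty (s := Finset.Ico (0 : ℤ) 4) ⟨0, by simp⟩ h
    rw [← Nat.cast_sum, ← hs] at hlt
    simp at hlt
    linarith
  set A := (cubes K n).filter fun α => α % 4 = r with hA
  have hApos : (0 : ℝ) < A.card := lt_of_lt_of_le (by positivity) hr
  have hlog : Real.log (cubes K n).card ≤ Real.log A.card + Real.log 4 := by
    rw [← Real.log_mul hApos.ne' (by norm_num)]
    apply Real.log_le_log hpos
    linarith
  suffices Real.log A.card ≤ n * ((dimH K).toReal * Real.log 3) by linarith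
  by_cases hm : 1 < A.card
  swap
  · have : A.card = 1 := by
      have : 0 < A.card := by exact_mod_cast hApos
      omega
    rw [this]
    simp only [Nat.cast_one, Real.log_one]
    positivity
  have hpt : ∀ α : A, ∃ b : ℝ, (∀ y ∈ K, (1 / 3 : ℝ) ^ n * y + b ∈ K) ∧
      ∃ y ∈ K, (1 / 3 : ℝ) ^ n * y + b ∈ Qcube n α := by
    rintro ⟨α, hα⟩
    obtain ⟨x, hx, hxK⟩ := (mem_cubes h01).mp (Finset.mem_filter.mp hα).1
    obtain ⟨b, ⟨y, hy, rfl⟩, hb⟩ := exists_level_map h1 h2 n x hxK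
    exact ⟨b, hb, y, hy, hx⟩
  choose b hbK y hyK hbQ using hpt
  have h3 : (0 : ℝ) < 3 ^ n := by positivity
  let φ := A.equivFin.symm
  have := separated_dim K hK hne ((1 / 3) ^ n) (by positivity)
    (pow_lt_one₀ (by norm_num) (by norm_num) hn.ne') A.card hm (fun i => b (φ i))
    (fun i => hbK _) ((1 / 3) ^ n) (by positivity) ?_
  · rw [Real.log_pow, one_div, Real.log_inv] at this
    linarith
  intro i j hij u hu v hv
  have hne' : φ i ≠ φ j := fun h => hij (φ.injective h)
  generalize φ i = α at hne' ⊢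
  generalize φ j = β at hne' ⊢
  have hu' := h01 hu
  have hv' := h01 hv
  have hyα := h01 (hyK α)
  have hyβ := h01 (hyK β)
  have hα := mem_Qcube.mp (hbQ α)
  have hβ := mem_Qcube.mp (hbQ β)
  have hcan : ((1 : ℝ) / 3) ^ n * 3 ^ n = 1 := by rw [← mul_pow]; norm_num
  have e1 : ∀ y b : ℝ, ((1 / 3) ^ n * y + b) * 3 ^ n = y + b * 3 ^ n := by
    intro y b
    linear_combination y * hcan
  rw [e1] at hα hβ
  have hmod : (α : ℤ) + 4 ≤ β ∨ (β : ℤ) + 4 ≤ α := by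
    have ha := (Finset.mem_filter.mp α.2).2
    have hb := (Finset.mem_filter.mp β.2).2
    have : (α : ℤ) ≠ β := fun h => hne' (Subtype.ext h)
    omega
  -- cubes 4 indices apart have points more than 3 units apart, and each cylinder has diameter at
  -- most one unit, which leaves one unit between the two cylinders
  have hgoal : 1 ≤ |(u + b α * 3 ^ n) - (v + b β * 3 ^ n)| := by
    simp only [mem_Icc] at hu' hv' hyα hyβ
    rw [le_abs]
    rcases hmod with h | h
    · right
      have : ((α : ℤ) : ℝ) + 4 ≤ ((β : ℤ) : ℝ) := by exact_mod_cast h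
      linarith
    · left
      have : ((β : ℤ) : ℝ) + 4 ≤ ((α : ℤ) : ℝ) := by exact_mod_cast h
      linarith
  rw [← e1, ← e1, ← sub_mul, abs_mul, abs_of_pos h3] at hgoal
  have h6 : 0 < ((1 : ℝ) / 3) ^ n := by positivity
  calc ((1 : ℝ) / 3) ^ n = (1 / 3) ^ n * 1 := (mul_one _).symm
    _ ≤ _ := mul_le_mul_of_nonneg_left hgoal h6.le
    _ = _ := by linear_combination |(1 / 3) ^ n * u + b α - ((1 / 3) ^ n * v + b β)| * hcan

/-- Hausdorff and box dimension of `K` agree, and the latter exists as a limit. -/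
lemma tendsto_log_card {K : Set ℝ} (hK : IsCompact K) (h01 : K ⊆ Icc 0 1) (hne : K.Nonempty)
    {c : Fin 3 → ℝ} (h1 : ∀ i, ∀ y ∈ K, y / 3 + c i ∈ K)
    (h2 : ∀ x ∈ K, ∃ i, ∃ y ∈ K, x = y / 3 + c i) :
    Tendsto (fun n : ℕ => Real.log (cubes K n).card / n) atTop
      (nhds ((dimH K).toReal * Real.log 3)) := by
  rw [tendsto_order]
  constructor
  · intro a ha
    by_contra h
    have := dim_le_of_frequently h01 hne a (by
      rw [not_eventually] at h
      exact h.mono fun n hn => not_lt.mp hn)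
    linarith
  · intro a ha
    have h0 : Tendsto (fun n : ℕ => (dimH K).toReal * Real.log 3 + Real.log 4 / n) atTop
        (nhds ((dimH K).toReal * Real.log 3 + 0)) :=
      tendsto_const_nhds.add (tendsto_const_div_atTop_nhds_zero_nat _)
    rw [add_zero] at h0
    filter_upwards [h0.eventually (gt_mem_nhds ha), eventually_gt_atTop 0] with n hn hn0
    refine lt_of_le_of_lt ?_ hn
    have hn0' : (0 : ℝ) < n := by exact_mod_cast hn0
    rw [div_le_iff₀ hn0', add_mul, div_mul_cancel₀ _ hn0'.ne']
    linarith [card_le hK h01 hne h1 h2 n hn0]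

/-! ### The projection pressure of a constant -/

/-- Surjectivity of the canonical projection onto `K`. -/
lemma exists_code {K : Set ℝ} (S : Fin 3 → ℝ → ℝ) (hS : K = ⋃ i, S i '' K) (π : Sig 3 → ℝ)
    (hπ : ∀ x, (⋂ n, itIm S K x n) = {π x}) (x : ℝ) (hx : x ∈ K) : ∃ β, π β = x := by
  have hstep : ∀ x : K, ∃ (i : Fin 3) (y : K), S i y = x := by
    rintro ⟨x, hx⟩
    rw [hS] at hx
    obtain ⟨i, y, hy, hxy⟩ := mem_iUnion.mp hx
    exact ⟨i, ⟨y, hy⟩, hxy⟩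
  choose i y hiy using hstep
  have hmem : ∀ (n : ℕ) (x : K), (x : ℝ) ∈ itIm S K (fun k => i (y^[k] x)) n := by
    intro n
    induction n with
    | zero => intro x; exact x.2
    | succ n ih => intro x; exact ⟨y x, ih (y x), hiy x⟩
  refine ⟨fun k => i (y^[k] ⟨x, hx⟩), ?_⟩
  have : x ∈ ⋂ n, itIm S K (fun k => i (y^[k] ⟨x, hx⟩)) n := mem_iInter.mpr fun n => hmem n ⟨x, hx⟩
  rw [hπ] at this
  exact this.symm

lemma Zsum_const {K : Set ℝ} (h01 : K ⊆ Icc 0 1) (π : Sig 3 → ℝ)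
    (hπ : ∀ x ∈ K, ∃ β, π β = x) (a : ℝ) (n : ℕ) :
    Zsum K π (fun _ => a) n = (cubes K n).card * Real.exp (n * a) := by
  classical
  have hterm : ∀ α : ℤ, (⨆ β ∈ π ⁻¹' (Qcube n α ∩ K), Real.exp (birk (fun _ => a) n β))
      = if α ∈ cubes K n then Real.exp (n * a) else 0 := by
    intro α
    have hin : ∀ β : Sig 3, (⨆ _ : β ∈ π ⁻¹' (Qcube n α ∩ K), Real.exp (birk (fun _ => a) n β))
        = if π β ∈ Qcube n α ∩ K then Real.exp (n * a) else 0 := by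
      intro β
      split_ifs with h
      · have : Nonempty (β ∈ π ⁻¹' (Qcube n α ∩ K)) := ⟨h⟩
        rw [ciSup_const]
        simp [birk]
      · have : IsEmpty (β ∈ π ⁻¹' (Qcube n α ∩ K)) := ⟨h⟩
        exact Real.iSup_of_isEmpty _
    simp_rw [hin]
    split_ifs with h
    · obtain ⟨x, hx⟩ := (mem_cubes h01).mp h
      obtain ⟨β, rfl⟩ := hπ x hx.2
      apply le_antisymm
      · exact ciSup_le fun γ => by split_ifs <;> first | exact le_rfl | exact (Real.exp_pos _).le
      · refine le_ciSup_of_le ⟨Real.exp (n * a), ?_⟩ β (by rw [if_pos hx])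
        rintro _ ⟨γ, rfl⟩
        dsimp only
        split_ifs <;> first | exact le_rfl | exact (Real.exp_pos _).le
    · have : ∀ β : Sig 3, π β ∉ Qcube n α ∩ K := fun β hβ => h ((mem_cubes h01).mpr ⟨_, hβ⟩)
      simp [this]
  unfold Zsum
  simp_rw [hterm]
  rw [tsum_eq_sum (s := cubes K n) (fun α hα => if_neg hα), Finset.sum_ite_mem]
  simp

lemma pressure_eq {K : Set ℝ} (hK : IsCompact K) (h01 : K ⊆ Icc 0 1) (hne : K.Nonempty)
    {c : Fin 3 → ℝ} (h1 : ∀ i, ∀ y ∈ K, y / 3 + c i ∈ K)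
    (h2 : ∀ x ∈ K, ∃ i, ∃ y ∈ K, x = y / 3 + c i) (π : Sig 3 → ℝ)
    (hπ : ∀ x ∈ K, ∃ β, π β = x) (t : ℝ) :
    projPressure K π (fun _ => -t * Real.log 3) = ((dimH K).toReal - t) * Real.log 3 := by
  apply Tendsto.limsup_eq
  have h := (tendsto_log_card hK h01 hne h1 h2).add_const (-t * Real.log 3)
  have hlim : (dimH K).toReal * Real.log 3 + -t * Real.log 3
      = ((dimH K).toReal - t) * Real.log 3 := by ring
  rw [hlim] at h
  refine h.congr' ?_
  filter_upwards [eventually_gt_atTop 0] with n hn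
  have hn' : (n : ℝ) ≠ 0 := by exact_mod_cast hn.ne'
  have hpos : ((cubes K n).card : ℝ) ≠ 0 := by exact_mod_cast (cubes_card_pos h01 hne n).ne'
  rw [Zsum_const h01 π hπ, Real.log_mul hpos (Real.exp_pos _).ne', Real.log_exp]
  field_simp

lemma subset_unit {K : Set ℝ} (hK : IsCompact K) (hne : K.Nonempty) {c : Fin 3 → ℝ}
    (hc : ∀ i, 0 ≤ c i ∧ c i ≤ 2 / 3) (h2 : ∀ x ∈ K, ∃ i, ∃ y ∈ K, x = y / 3 + c i) :
    K ⊆ Icc 0 1 := by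
  obtain ⟨M, hM, hM'⟩ := hK.exists_isGreatest hne
  obtain ⟨m, hm, hm'⟩ := hK.exists_isLeast hne
  intro x hx
  have hxM := hM' hx
  have hxm := hm' hx
  obtain ⟨i, y, hy, rfl⟩ := h2 M hM
  obtain ⟨j, z, hz, rfl⟩ := h2 m hm
  have := hM' hy
  have := hm' hz
  have := hc i
  have := hc j
  constructor <;> linarith

/-- **Example 3.1** (λ-Cantor set). Let `0 < λ < 1` and let `F_λ` be the attractor of
the IFS `S₁ x = x/3`, `S₂ x = x/3 + λ/3`, `S₃ x = x/3 + 2/3` on `ℝ`, with canonical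
projection `π : {1,2,3}^ℕ → F_λ`. Then `dim_H F_λ` is the unique real root `t` of
`P_π(−t·log 3) = 0`. -/
theorem dimH_lambdaCantor_unique_root {lam : ℝ} (hlam0 : 0 < lam) (hlam1 : lam < 1)
    (K : Set ℝ) (hKcomp : IsCompact K) (hKne : K.Nonempty)
    (hKattr : K = ⋃ i,
      (![fun x : ℝ => x / 3, fun x : ℝ => x / 3 + lam / 3, fun x : ℝ => x / 3 + 2 / 3] i) '' K)
    (π : Sig 3 → ℝ)
    (hπ : ∀ x, (⋂ n, itIm
      ![fun x : ℝ => x / 3, fun x : ℝ => x / 3 + lam / 3, fun x : ℝ => x / 3 + 2 / 3]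
      K x n) = {π x}) :
    (∃! t : ℝ, projPressure K π (fun _ => -t * Real.log 3) = 0)
    ∧ projPressure K π (fun _ => -(dimH K).toReal * Real.log 3) = 0 := by
  set S : Fin 3 → ℝ → ℝ :=
    ![fun x : ℝ => x / 3, fun x : ℝ => x / 3 + lam / 3, fun x : ℝ => x / 3 + 2 / 3] with hS
  let c : Fin 3 → ℝ := ![0, lam / 3, 2 / 3]
  have hSc : ∀ i x, S i x = x / 3 + c i := by
    intro i x
    fin_cases i <;> simp [hS, c]
  have hc : ∀ i, 0 ≤ c i ∧ c i ≤ 2 / 3 := by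
    intro i
    fin_cases i <;> norm_num [c]
    constructor <;> linarith
  have h1 : ∀ i, ∀ y ∈ K, y / 3 + c i ∈ K := by
    intro i y hy
    rw [← hSc, hKattr]
    exact mem_iUnion.mpr ⟨i, y, hy, rfl⟩
  have h2 : ∀ x ∈ K, ∃ i, ∃ y ∈ K, x = y / 3 + c i := by
    intro x hx
    rw [hKattr] at hx
    obtain ⟨i, y, hy, rfl⟩ := mem_iUnion.mp hx
    exact ⟨i, y, hy, hSc i y⟩
  have h01 : K ⊆ Icc 0 1 := subset_unit hKcomp hKne hc h2
  have hP := pressure_eq hKcomp h01 hKne h1 h2 π (exists_code S hKattr π hπ)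
  have hl3 : Real.log 3 ≠ 0 := (Real.log_pos (by norm_num)).ne'
  refine ⟨⟨(dimH K).toReal, by simp only [hP]; ring, fun t ht => ?_⟩, by rw [hP]; ring⟩
  simp only [hP, mul_eq_zero, hl3, or_false] at ht
  linarith

end
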